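/- Under the assumptions of the constant-stepsize gradient projection method (grad f Lipschitz with constant L on C, 0 < α < 1/L, p_{k+1} = P_C(exp_{p_k}(−α grad f(p_k))), f bounded below by f* on C), for every N ∈ ℕ: min{ d(p_k, p_{k+1}) : k = 0,…,N } ≤ √(f(p₀) − f*) / √(Γ(N+1)), where Γ := (1−αL)/(2α). -/

import Mathlib

noncomputable section

/-- Lorentzian inner product on ℝ^{n+1}. -/
def lip {n : ℕ} (x y : Fin (n+1) → ℝ) : ℝ :=
  (∑ i : Fin n, x i.castSucc * y i.castSucc) - x (Fin.last n) * y (Fin.last n)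

/-- Lorentzian norm (of vectors with nonnegative self-product). -/
def lnorm {n : ℕ} (x : Fin (n+1) → ℝ) : ℝ := Real.sqrt (lip x x)

/-- Euclidean dot product. -/
def edot {n : ℕ} (x y : Fin (n+1) → ℝ) : ℝ := ∑ i, x i * y i

/-- The matrix J = diag(1,…,1,−1) as a map. -/
def Jm {n : ℕ} (x : Fin (n+1) → ℝ) : Fin (n+1) → ℝ :=
  fun i => if i = Fin.last n then -(x i) else x i

/-- The κ-hyperbolic space form (hyperboloid model). -/
def Hyp {n : ℕ} (κ : ℝ) : Set (Fin (n+1) → ℝ) :=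
  {p | lip p p = -1/κ ∧ 0 < p (Fin.last n)}

/-- Inverse hyperbolic cosine. -/
def arcosh (x : ℝ) : ℝ := Real.log (x + Real.sqrt (x^2 - 1))

/-- Intrinsic distance on the κ-hyperbolic space form. -/
def dH {n : ℕ} (κ : ℝ) (p q : Fin (n+1) → ℝ) : ℝ :=
  (1 / Real.sqrt κ) * arcosh (-(κ * lip p q))

/-- Lorentzian projection onto the tangent space at p. -/
def projT {n : ℕ} (κ : ℝ) (p x : Fin (n+1) → ℝ) : Fin (n+1) → ℝ :=
  x + (κ * lip p x) • p

/-- Logarithm map of the κ-hyperbolic space form. -/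
def logH {n : ℕ} (κ : ℝ) (p q : Fin (n+1) → ℝ) : Fin (n+1) → ℝ :=
  (dH κ p q / lnorm (projT κ p q)) • projT κ p q

/-- Exponential map of the κ-hyperbolic space form. -/
def expH {n : ℕ} (κ : ℝ) (p v : Fin (n+1) → ℝ) : Fin (n+1) → ℝ :=
  Real.cosh (Real.sqrt κ * lnorm v) • p +
    (Real.sinh (Real.sqrt κ * lnorm v) / (Real.sqrt κ * lnorm v)) • v

/-- The cone spanned by a set. -/
def coneOf {n : ℕ} (C : Set (Fin (n+1) → ℝ)) : Set (Fin (n+1) → ℝ) :=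
  {x | ∃ t : ℝ, 0 ≤ t ∧ ∃ p ∈ C, x = t • p}

/-- The Lorentz cone. -/
def LorentzCone {n : ℕ} : Set (Fin (n+1) → ℝ) :=
  {x | lip x x ≤ 0 ∧ 0 ≤ x (Fin.last n)}

/-- The interior of the Lorentz cone. -/
def LorentzConeInt {n : ℕ} : Set (Fin (n+1) → ℝ) :=
  {x | lip x x < 0 ∧ 0 < x (Fin.last n)}

/-- Euclidean gradient of f at p. -/
def euclGrad {n : ℕ} (f : (Fin (n+1) → ℝ) → ℝ) (p : Fin (n+1) → ℝ) : Fin (n+1) → ℝ :=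
  fun i => fderiv ℝ f p (Pi.single i 1)

/-- Riemannian gradient on the κ-hyperbolic space form. -/
def gradH {n : ℕ} (κ : ℝ) (f : (Fin (n+1) → ℝ) → ℝ) (p : Fin (n+1) → ℝ) : Fin (n+1) → ℝ :=
  projT κ p (Jm (euclGrad f p))

/-- Parallel transport from T_p to T_q along the geodesic. -/
def ptrans {n : ℕ} (κ : ℝ) (p q v : Fin (n+1) → ℝ) : Fin (n+1) → ℝ :=
  v - ((κ / (κ * lip p q - 1)) * lip q v) • (p + q)

lemma aux_arcosh (x : ℝ) : arcosh x = Real.arcosh x := rfl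

lemma lip_comm {n : ℕ} (x y : Fin (n+1) → ℝ) : lip x y = lip y x := by
  simp only [lip, mul_comm]

lemma lip_add_left {n : ℕ} (x y z : Fin (n+1) → ℝ) : lip (x + y) z = lip x z + lip y z := by
  simp only [lip, Pi.add_apply, add_mul, Finset.sum_add_distrib]; ring

lemma lip_smul_left {n : ℕ} (c : ℝ) (x z : Fin (n+1) → ℝ) : lip (c • x) z = c * lip x z := by
  simp only [lip, Pi.smul_apply, smul_eq_mul, mul_assoc, mul_sub, Finset.mul_sum]

lemma lip_add_right {n : ℕ} (x y z : Fin (n+1) → ℝ) : lip z (x + y) = lip z x + lip z y := by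
  rw [lip_comm, lip_add_left, lip_comm x, lip_comm y]

lemma lip_smul_right {n : ℕ} (c : ℝ) (x z : Fin (n+1) → ℝ) : lip z (c • x) = c * lip z x := by
  rw [lip_comm, lip_smul_left, lip_comm x]

lemma lip_neg_left {n : ℕ} (x z : Fin (n+1) → ℝ) : lip (-x) z = - lip x z := by
  have := lip_smul_left (-1) x z
  simpa using this

lemma lip_neg_right {n : ℕ} (x z : Fin (n+1) → ℝ) : lip z (-x) = - lip z x := by
  rw [lip_comm, lip_neg_left, lip_comm x]

lemma lip_sub_left {n : ℕ} (x y z : Fin (n+1) → ℝ) : lip (x - y) z = lip x z - lip y z := by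
  rw [sub_eq_add_neg, lip_add_left, lip_neg_left, sub_eq_add_neg]

lemma lip_sub_right {n : ℕ} (x y z : Fin (n+1) → ℝ) : lip z (x - y) = lip z x - lip z y := by
  rw [sub_eq_add_neg, lip_add_right, lip_neg_right, sub_eq_add_neg]

lemma lip_self_nonneg {n : ℕ} {κ : ℝ} (hκ : 0 < κ) {m x : Fin (n+1) → ℝ} (hm : m ∈ Hyp κ)
    (hx : lip m x = 0) : 0 ≤ lip x x := by
  obtain ⟨h1, h2⟩ := hm
  have cs := Finset.sum_mul_sq_le_sq_mul_sq Finset.univ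
    (fun i : Fin n => m i.castSucc) (fun i : Fin n => x i.castSucc)
  have hk : 0 < 1 / κ := by positivity
  have hk' : -1 / κ = -(1 / κ) := by ring
  rw [hk'] at h1
  simp only [lip, ← pow_two] at *
  have hS : 0 ≤ ∑ i : Fin n, x i.castSucc ^ 2 := Finset.sum_nonneg fun i _ => sq_nonneg _
  have e1 : ∑ i : Fin n, m i.castSucc * x i.castSucc = m (Fin.last n) * x (Fin.last n) := by
    linarith
  rw [e1] at cs
  have e2 : ∑ i : Fin n, m i.castSucc ^ 2 = m (Fin.last n) ^ 2 - 1 / κ := by linarith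
  rw [e2] at cs
  by_contra hneg
  push Not at hneg
  have hm2 : 0 < m (Fin.last n) ^ 2 := by positivity
  nlinarith

lemma lip_cs {n : ℕ} {κ : ℝ} (hκ : 0 < κ) {m x y : Fin (n+1) → ℝ} (hm : m ∈ Hyp κ)
    (hx : lip m x = 0) (hy : lip m y = 0) : lip x y ^ 2 ≤ lip x x * lip y y := by
  have h : ∀ t : ℝ, 0 ≤ lip y y * (t * t) + (2 * lip x y) * t + lip x x := by
    intro t
    have h0 := lip_self_nonneg hκ hm (x := x + t • y)
      (by rw [lip_add_right, lip_smul_right, hx, hy]; ring)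
    simp only [lip_add_left, lip_add_right, lip_smul_left, lip_smul_right, lip_comm y x] at h0
    linarith
  have := discrim_le_zero h
  rw [discrim] at this
  nlinarith

lemma lip_le_norm {n : ℕ} {κ : ℝ} (hκ : 0 < κ) {m x y : Fin (n+1) → ℝ} (hm : m ∈ Hyp κ)
    (hx : lip m x = 0) (hy : lip m y = 0) : lip x y ≤ lnorm x * lnorm y := by
  rw [lnorm, lnorm, ← Real.sqrt_mul (lip_self_nonneg hκ hm hx)]
  exact Real.le_sqrt_of_sq_le (lip_cs hκ hm hx hy)

lemma lip_projT {n : ℕ} {κ : ℝ} (hκ : 0 < κ) {m : Fin (n+1) → ℝ} (hm : m ∈ Hyp κ)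
    (x : Fin (n+1) → ℝ) : lip m (projT κ m x) = 0 := by
  rw [projT, lip_add_right, lip_smul_right, hm.1]
  field_simp
  ring

lemma hyp_one_le {n : ℕ} {κ : ℝ} (hκ : 0 < κ) {p q : Fin (n+1) → ℝ} (hp : p ∈ Hyp κ)
    (hq : q ∈ Hyp κ) : 1 ≤ -(κ * lip p q) := by
  have h0 := lip_self_nonneg hκ hp (lip_projT hκ hp q)
  simp only [projT, lip_add_left, lip_add_right, lip_smul_left, lip_smul_right, hp.1, hq.1,
    lip_comm q p] at h0
  have h1 : 1 ≤ (κ * lip p q) ^ 2 := by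
    have e : κ * (-1 / κ + κ * lip p q * lip p q + (κ * lip p q * lip p q +
      κ * lip p q * (κ * lip p q * (-1 / κ)))) = (κ * lip p q) ^ 2 - 1 := by
      field_simp; ring
    have : 0 ≤ (κ * lip p q) ^ 2 - 1 := by
      rw [← e]; apply mul_nonneg hκ.le; linarith
    linarith
  have h2 : lip p q < 0 := by
    obtain ⟨p1, p2⟩ := hp
    obtain ⟨q1, q2⟩ := hq
    have cs := Finset.sum_mul_sq_le_sq_mul_sq Finset.univ
      (fun i : Fin n => p i.castSucc) (fun i : Fin n => q i.castSucc)
    have hk : 0 < 1 / κ := by positivity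
    have hk' : -1 / κ = -(1 / κ) := by ring
    rw [hk'] at p1 q1
    simp only [lip, ← pow_two] at p1 q1 ⊢
    have hS : 0 ≤ ∑ i : Fin n, q i.castSucc ^ 2 := Finset.sum_nonneg fun i _ => sq_nonneg _
    have hT : 0 ≤ ∑ i : Fin n, p i.castSucc ^ 2 := Finset.sum_nonneg fun i _ => sq_nonneg _
    have e2 : ∑ i : Fin n, p i.castSucc ^ 2 < p (Fin.last n) ^ 2 := by linarith
    have e3 : ∑ i : Fin n, q i.castSucc ^ 2 < q (Fin.last n) ^ 2 := by linarith
    have e4 := mul_lt_mul'' e2 e3 hT hS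
    have e5 := abs_lt_of_sq_lt_sq (lt_of_le_of_lt cs (by rwa [← mul_pow] at e4))
      (by positivity : 0 ≤ p (Fin.last n) * q (Fin.last n))
    linarith [le_abs_self (∑ i : Fin n, p i.castSucc * q i.castSucc)]
  have h3 : κ * lip p q < 0 := mul_neg_of_pos_of_neg hκ h2
  nlinarith

lemma sinh_scale {s t : ℝ} (hs : 0 ≤ s) (hst : s ≤ t) :
    t * Real.sinh s ≤ s * Real.sinh t := by
  have hc : ConvexOn ℝ (Set.Ici (0:ℝ)) Real.sinh := by
    apply convexOn_of_deriv2_nonneg (convex_Ici 0) Real.continuous_sinh.continuousOn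
      Real.differentiable_sinh.differentiableOn
    · simpa using Real.differentiable_cosh.differentiableOn
    · intro x hx
      simp only [interior_Ici, Set.mem_Ioi] at hx
      simpa using hx.le
  rcases hs.eq_or_lt with rfl | hs
  · simp
  have ht : 0 < t := by linarith
  have hb1 : 0 ≤ 1 - s / t := by rw [sub_nonneg, div_le_one ht]; exact hst
  have hb2 : 0 ≤ s / t := by positivity
  have h := hc.2 (Set.mem_Ici.2 le_rfl) (Set.mem_Ici.2 ht.le) hb1 hb2 (by ring)
  simp only [smul_eq_mul, mul_zero, zero_add, Real.sinh_zero] at h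
  rw [div_mul_cancel₀ _ ht.ne', div_mul_eq_mul_div, le_div_iff₀ ht] at h
  linarith

lemma tanh_scale {x y : ℝ} (hx : 0 ≤ x) (hxy : x ≤ y) :
    x * (Real.sinh y * Real.cosh x) ≤ y * (Real.sinh x * Real.cosh y) := by
  have h := sinh_scale (s := y - x) (t := y + x) (by linarith) (by linarith)
  rw [Real.sinh_sub, Real.sinh_add] at h
  nlinarith

lemma key_ineq {a b e : ℝ} (ha : 0 < a) (hb : 0 < b) (he : e ≤ 1)
    (h : Real.cosh b * (Real.cosh a - 1) ≤ Real.sinh b * Real.sinh a * e) : a / 2 ≤ b * e := by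
  obtain ⟨A, rfl⟩ : ∃ A, a = 2 * A := ⟨a / 2, by ring⟩
  have hA : 0 < A := by linarith
  have sA : 0 < Real.sinh A := Real.sinh_pos_iff.2 hA
  have sb : 0 < Real.sinh b := Real.sinh_pos_iff.2 hb
  have cA := Real.cosh_pos A
  have cb := Real.cosh_pos b
  rw [Real.cosh_two_mul, Real.sinh_two_mul, Real.cosh_sq A] at h
  have h1 : Real.cosh b * Real.sinh A ≤ Real.sinh b * Real.cosh A * e := by
    have : (2 * Real.sinh A) * (Real.cosh b * Real.sinh A) ≤
      (2 * Real.sinh A) * (Real.sinh b * Real.cosh A * e) := by nlinarith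
    exact le_of_mul_le_mul_left this (by positivity)
  have h2 : Real.sinh b * Real.cosh A * e ≤ Real.sinh b * Real.cosh A := by
    have : 0 < Real.sinh b * Real.cosh A := by positivity
    nlinarith
  have h3 : A ≤ b := by
    have : 0 ≤ Real.sinh (b - A) := by rw [Real.sinh_sub]; linarith
    have := Real.sinh_nonneg_iff.1 this
    linarith
  have h4 := tanh_scale hA.le h3
  have h5 : A * (Real.sinh b * Real.cosh A) ≤ (b * e) * (Real.sinh b * Real.cosh A) := by
    have := mul_le_mul_of_nonneg_left h1 hb.le
    linarith
  have := le_of_mul_le_mul_right h5 (by positivity)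
  linarith

lemma lip_Jm {n : ℕ} (g v : Fin (n+1) → ℝ) : lip (Jm g) v = ∑ i, g i * v i := by
  rw [Fin.sum_univ_castSucc]
  simp [lip, Jm, Fin.castSucc_ne_last]

lemma fderiv_eq_lip {n : ℕ} {κ : ℝ} (f : (Fin (n+1) → ℝ) → ℝ) (x v : Fin (n+1) → ℝ)
    (hv : lip x v = 0) : fderiv ℝ f x v = lip (gradH κ f x) v := by
  rw [gradH, projT, lip_add_left, lip_smul_left, hv, mul_zero, add_zero, lip_Jm]
  have e : v = ∑ i, v i • (Pi.single i (1:ℝ) : Fin (n+1) → ℝ) := by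
    ext j; simp [Finset.sum_apply, Pi.single_apply]
  conv_lhs => rw [e]
  rw [map_sum]
  simp only [map_smul, smul_eq_mul, euclGrad, mul_comm]

lemma cone_mem {n : ℕ} {κ : ℝ} (hκ : 0 < κ) {C : Set (Fin (n+1) → ℝ)} (hC : C ⊆ Hyp κ)
    (hconv : Convex ℝ (coneOf C)) {p q : Fin (n+1) → ℝ} (hp : p ∈ C) (hq : q ∈ C)
    {s t : ℝ} (hs : 0 ≤ s) (ht : 0 ≤ t) (h : lip (s • p + t • q) (s • p + t • q) = -1 / κ) :
    s • p + t • q ∈ C := by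
  have h1 : (2 * s) • p ∈ coneOf C := ⟨2 * s, by positivity, p, hp, rfl⟩
  have h2 : (2 * t) • q ∈ coneOf C := ⟨2 * t, by positivity, q, hq, rfl⟩
  have h3 := hconv h1 h2 (by norm_num : (0:ℝ) ≤ 1/2) (by norm_num : (0:ℝ) ≤ 1/2) (by norm_num)
  rw [smul_smul, smul_smul] at h3
  have e1 : (1/2 : ℝ) * (2 * s) = s := by ring
  have e2 : (1/2 : ℝ) * (2 * t) = t := by ring
  rw [e1, e2] at h3
  obtain ⟨r, hr, m, hm, hrm⟩ := h3
  rw [hrm] at h ⊢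
  rw [lip_smul_left, lip_smul_right, (hC hm).1] at h
  have : r * r = 1 := by
    field_simp at h
    linarith
  have : r = 1 := by nlinarith
  rw [this, one_smul]; exact hm

/-- polar data -/
lemma polar {n : ℕ} {κ : ℝ} (hκ : 0 < κ) {p q : Fin (n+1) → ℝ} (hp : p ∈ Hyp κ)
    (hq : q ∈ Hyp κ) {a : ℝ} (ha : 0 < a) (hpq : -(κ * lip p q) = Real.cosh a) :
    ∃ u, lip p u = 0 ∧ lip u u = 1 / κ ∧ q = Real.cosh a • p + Real.sinh a • u := by
  have sa : 0 < Real.sinh a := Real.sinh_pos_iff.2 ha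
  have hl : lip p q = -(Real.cosh a / κ) := by field_simp; linarith
  have hl' : lip q p = -(Real.cosh a / κ) := by rw [lip_comm, hl]
  refine ⟨(Real.sinh a)⁻¹ • (q - Real.cosh a • p), ?_, ?_, ?_⟩
  · simp only [lip_smul_right, lip_sub_right, hl, hp.1]
    field_simp; ring
  · simp only [lip_smul_right, lip_sub_right, lip_smul_left, lip_sub_left, hl, hl', hp.1, hq.1]
    have := Real.cosh_sq a
    field_simp
    linarith
  · rw [smul_smul, mul_inv_cancel₀ sa.ne', one_smul]; abel

lemma descent_lip {n : ℕ} {κ : ℝ} (hκ : 0 < κ)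
    {C : Set (Fin (n+1) → ℝ)} (hC : C ⊆ Hyp κ) (hconv : Convex ℝ (coneOf C))
    {f : (Fin (n+1) → ℝ) → ℝ} (hf : Differentiable ℝ f) {L : ℝ}
    (hLip : ∀ a ∈ C, ∀ b ∈ C,
      lnorm (ptrans κ a b (gradH κ f a) - gradH κ f b) ≤ L * dH κ a b)
    {p q u : Fin (n+1) → ℝ} (hp : p ∈ C) (hq : q ∈ C) {a : ℝ} (ha : 0 < a)
    (hpu : lip p u = 0) (huu : lip u u = 1 / κ) (hqe : q = Real.cosh a • p + Real.sinh a • u) :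
    f q ≤ f p + a * lip (gradH κ f p) u + L * a ^ 2 / (2 * κ) := by
  have sa : 0 < Real.sinh a := Real.sinh_pos_iff.2 ha
  have hup : lip u p = 0 := by rw [lip_comm, hpu]
  have hpp := (hC hp).1
  set g := gradH κ f p with hg
  have hpg : lip p g = 0 := lip_projT hκ (hC hp) _
  have hgp : lip g p = 0 := by rw [lip_comm, hpg]
  let γ : ℝ → (Fin (n+1) → ℝ) := fun s => Real.cosh s • p + Real.sinh s • u
  let γ' : ℝ → (Fin (n+1) → ℝ) := fun s => Real.sinh s • p + Real.cosh s • u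
  have hγd : ∀ s, HasDerivAt γ (γ' s) s := fun s =>
    ((Real.hasDerivAt_cosh s).smul_const p).add ((Real.hasDerivAt_sinh s).smul_const u)
  have hγγ : ∀ s, lip (γ s) (γ s) = -1 / κ := by
    intro s
    simp only [γ, lip_smul_right, lip_add_right, lip_smul_left, lip_add_left, hup, hpu, huu, hpp]
    have := Real.cosh_sq s
    field_simp
    linarith
  have hγγ' : ∀ s, lip (γ s) (γ' s) = 0 := by
    intro s
    simp only [γ, γ', lip_smul_right, lip_add_right, lip_smul_left, lip_add_left, hup, hpu, huu,
      hpp]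
    field_simp
    ring
  have hγ'γ' : ∀ s, lip (γ' s) (γ' s) = 1 / κ := by
    intro s
    simp only [γ', lip_smul_right, lip_add_right, lip_smul_left, lip_add_left, hup, hpu, huu, hpp]
    have := Real.cosh_sq s
    field_simp
    linarith
  have hγC : ∀ s, 0 ≤ s → s ≤ a → γ s ∈ C := by
    intro s h0 h1
    have e : γ s = (Real.sinh (a - s) / Real.sinh a) • p + (Real.sinh s / Real.sinh a) • q := by
      rw [hqe, smul_add, smul_smul, smul_smul, ← add_assoc, ← add_smul,
        div_mul_cancel₀ _ sa.ne']
      have e' : Real.sinh (a - s) / Real.sinh a + Real.sinh s / Real.sinh a * Real.cosh a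
          = Real.cosh s := by
        rw [Real.sinh_sub]
        field_simp
        ring
      rw [e']
    have h2 := hγγ s
    rw [e] at h2 ⊢
    exact cone_mem hκ hC hconv hp hq
      (div_nonneg (Real.sinh_nonneg_iff.2 (by linarith)) sa.le)
      (div_nonneg (Real.sinh_nonneg_iff.2 h0) sa.le) h2
  have hbound : ∀ s, 0 ≤ s → s ≤ a → fderiv ℝ f (γ s) (γ' s) ≤ lip g u + L * s / κ := by
    intro s h0 h1
    have hm := hγC s h0 h1
    rw [fderiv_eq_lip (κ := κ) f _ _ (hγγ' s)]
    have hkl : κ * lip p (γ s) = -Real.cosh s := by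
      simp only [γ, lip_smul_right, lip_add_right, hpu, hpp]
      field_simp; ring
    have hd : dH κ p (γ s) = s / Real.sqrt κ := by
      rw [dH, hkl, neg_neg, aux_arcosh, Real.arcosh_cosh h0]; ring
    have hcs : 0 < 1 + Real.cosh s := by linarith [Real.cosh_pos s]
    have hlg : lip (γ s) g = Real.sinh s * lip u g := by
      simp only [γ, lip_smul_left, lip_add_left, hpg]; ring
    have hpt : ptrans κ p (γ s) g =
        g + (κ * (Real.sinh s * lip u g) / (1 + Real.cosh s)) • (p + γ s) := by
      rw [ptrans, hkl, hlg, sub_eq_add_neg, ← neg_smul]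
      congr 2
      have : -Real.cosh s - 1 ≠ 0 := by linarith
      field_simp
      ring
    have hpγ : lip p (γ s) = -(Real.cosh s / κ) := by field_simp; linarith
    have hpγ' : lip p (γ' s) = -(Real.sinh s / κ) := by
      simp only [γ', lip_smul_right, lip_add_right, hpu, hpp]
      field_simp; ring
    have hgγ' : lip g (γ' s) = Real.cosh s * lip u g := by
      simp only [γ', lip_smul_right, lip_add_right, hgp, lip_comm g u]; ring
    have ht1 : lip (γ s) (ptrans κ p (γ s) g) = 0 := by
      rw [hpt]
      simp only [lip_smul_right, lip_add_right, hlg, lip_comm (γ s) p, hpγ, hγγ]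
      field_simp
      ring
    have ht2 : lip (ptrans κ p (γ s) g) (γ' s) = lip u g := by
      rw [hpt]
      simp only [lip_smul_left, lip_add_left, hgγ', hpγ', hγγ']
      have := Real.sinh_sq s
      field_simp
      linear_combination (-lip u g) * this
    have ht3 : lip (γ s) (gradH κ f (γ s)) = 0 := lip_projT hκ (hC hm) _
    have h4 := lip_le_norm hκ (hC hm) (x := ptrans κ p (γ s) g - gradH κ f (γ s)) (y := -(γ' s))
      (by rw [lip_sub_right, ht1, ht3, sub_zero]) (by rw [lip_neg_right, hγγ', neg_zero])
    rw [lip_neg_right, lip_sub_left, ht2] at h4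
    have h5 : lnorm (-(γ' s)) = 1 / Real.sqrt κ := by
      rw [lnorm, lip_neg_left, lip_neg_right, hγ'γ', neg_neg, Real.sqrt_div zero_le_one,
        Real.sqrt_one]
    have h6 := hLip p hp _ hm
    rw [h5] at h4
    rw [hd] at h6
    have h7 : 0 ≤ 1 / Real.sqrt κ := by positivity
    have h8 := mul_le_mul_of_nonneg_right h6 h7
    have h9 : L * (s / Real.sqrt κ) * (1 / Real.sqrt κ) = L * s / κ := by
      rw [show L * (s / Real.sqrt κ) * (1 / Real.sqrt κ) = L * s / (Real.sqrt κ * Real.sqrt κ) by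
        field_simp, Real.mul_self_sqrt hκ.le]
    rw [lip_comm g u]
    linarith
  let φ : ℝ → ℝ := fun s => f (γ s) - s * lip g u - L / (2 * κ) * s ^ 2
  have hφ : ∀ s, HasDerivAt φ (fderiv ℝ f (γ s) (γ' s) - 1 * lip g u
      - L / (2 * κ) * ((2 : ℕ) * s ^ (2 - 1))) s := fun s =>
    (((hf (γ s)).hasFDerivAt.comp_hasDerivAt s (hγd s)).sub
      ((hasDerivAt_id s).mul_const _)).sub ((hasDerivAt_pow 2 s).const_mul _)
  have hanti : AntitoneOn φ (Set.Icc 0 a) := by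
    apply antitoneOn_of_deriv_nonpos (convex_Icc 0 a)
    · exact fun s _ => (hφ s).continuousAt.continuousWithinAt
    · exact fun s _ => (hφ s).differentiableAt.differentiableWithinAt
    · intro s hs
      rw [interior_Icc] at hs
      rw [(hφ s).deriv]
      have := hbound s hs.1.le hs.2.le
      have e : L / (2 * κ) * ((2 : ℕ) * s ^ (2 - 1)) = L * s / κ := by
        push_cast
        simp only [Nat.add_one_sub_one, pow_one]
        field_simp
      rw [e]; linarith
  have h := hanti (Set.left_mem_Icc.2 ha.le) (Set.right_mem_Icc.2 ha.le) ha.le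
  have e0 : γ 0 = p := by simp [γ]
  have ea : γ a = q := hqe.symm
  simp only [φ, e0, ea] at h
  have : L * a ^ 2 / (2 * κ) = L / (2 * κ) * a ^ 2 := by ring
  rw [this]
  linarith

lemma proj_ineq {n : ℕ} {κ : ℝ} (hκ : 0 < κ) {p q u w : Fin (n+1) → ℝ} (hp : p ∈ Hyp κ)
    {a : ℝ} (ha : 0 < a) (hpw : lip p w = 0)
    (hpu : lip p u = 0) (huu : lip u u = 1 / κ) (hqe : q = Real.cosh a • p + Real.sinh a • u)
    (hmin : dH κ (expH κ p w) q ≤ dH κ (expH κ p w) p) : a / (2 * κ) ≤ lip w u := by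
  have sk : 0 < Real.sqrt κ := Real.sqrt_pos.2 hκ
  have hww := lip_self_nonneg hκ hp hpw
  have hwp : lip w p = 0 := by rw [lip_comm, hpw]
  have hpp := hp.1
  obtain ⟨b, hb⟩ : ∃ b, b = Real.sqrt κ * lnorm w := ⟨_, rfl⟩
  have hb0 : 0 ≤ b := by rw [hb, lnorm]; positivity
  have hb2 : b ^ 2 = κ * lip w w := by
    rw [hb, mul_pow, lnorm, Real.sq_sqrt hκ.le, Real.sq_sqrt hww]
  have hz : expH κ p w = Real.cosh b • p + (Real.sinh b / b) • w := by rw [hb]; rfl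
  have hmin' : Real.arcosh (-(κ * lip (expH κ p w) q)) ≤
      Real.arcosh (-(κ * lip (expH κ p w) p)) := by
    have h1 : 0 < 1 / Real.sqrt κ := by positivity
    exact le_of_mul_le_mul_left hmin h1
  have z1 : -(κ * lip (expH κ p w) p) = Real.cosh b := by
    rw [hz]
    simp only [lip_smul_left, lip_add_left, hpp, hwp]
    field_simp; ring
  have z2 : -(κ * lip (expH κ p w) q) =
      Real.cosh b * Real.cosh a - κ * (Real.sinh b / b) * Real.sinh a * lip w u := by
    rw [hz, hqe]
    simp only [lip_smul_left, lip_add_left, lip_smul_right, lip_add_right, hpp, hwp, hpu]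
    have : κ * (-1 / κ) = -1 := by field_simp
    linear_combination (-(Real.cosh b * Real.cosh a)) * this
  have hle : -(κ * lip (expH κ p w) q) ≤ Real.cosh b := by
    rw [z1] at hmin'
    by_cases h : 0 < -(κ * lip (expH κ p w) q)
    · exact (Real.arcosh_le_arcosh h (Real.cosh_pos b)).1 hmin'
    · linarith [Real.cosh_pos b]
  rw [z2] at hle
  rcases hb0.eq_or_lt with h0 | hbp
  · rw [← h0] at hle
    simp at hle
    have : 1 < Real.cosh a := Real.one_lt_cosh.2 ha.ne'
    linarith
  have hcs := lip_cs hκ hp hpw hpu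
  have he : κ * lip w u / b ≤ 1 := by
    rw [div_le_one hbp]
    apply le_of_sq_le_sq _ hb0
    rw [huu] at hcs
    rw [hb2, mul_pow]
    calc κ ^ 2 * lip w u ^ 2 ≤ κ ^ 2 * (lip w w * (1 / κ)) := by gcongr
      _ = κ * lip w w := by field_simp
  have hk := key_ineq ha hbp he (by
    have e : Real.sinh b * Real.sinh a * (κ * lip w u / b) =
      κ * (Real.sinh b / b) * Real.sinh a * lip w u := by ring
    rw [e]; linarith)
  rw [mul_div_cancel₀ _ hbp.ne'] at hk
  rw [div_le_iff₀ (by positivity)]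
  linarith

/-- Iteration-complexity bound for the gradient projection method with constant
step size: with Γ = (1−αL)/(2α) and f bounded below by f* on C, for every N
min{d(p_k,p_{k+1}) : k ≤ N} ≤ √(f(p₀) − f*)/√(Γ(N+1)). -/
theorem gradient_projection_iteration_complexity {n : ℕ} (κ : ℝ) (hκ : 0 < κ)
    (C : Set (Fin (n+1) → ℝ)) (hC : C ⊆ Hyp κ) (hCc : IsClosed C)
    (hconv : Convex ℝ (coneOf C))
    (f : (Fin (n+1) → ℝ) → ℝ) (hf : Differentiable ℝ f)
    (L : ℝ) (hL : 0 ≤ L)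
    (hLip : ∀ a ∈ C, ∀ b ∈ C,
      lnorm (ptrans κ a b (gradH κ f a) - gradH κ f b) ≤ L * dH κ a b)
    (α : ℝ) (hα1 : 0 < α) (hα2 : α < 1 / L)
    (fstar : ℝ) (hfstar : ∀ q ∈ C, fstar ≤ f q)
    (p : ℕ → Fin (n+1) → ℝ) (hp0 : p 0 ∈ C)
    (hrec : ∀ k : ℕ, p (k+1) ∈ C ∧
      (∀ y ∈ C, dH κ (expH κ (p k) (-(α • gradH κ f (p k)))) (p (k+1)) ≤
        dH κ (expH κ (p k) (-(α • gradH κ f (p k)))) y) ∧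
      (∀ y ∈ C, lip (logH κ (p (k+1)) (expH κ (p k) (-(α • gradH κ f (p k)))))
        (logH κ (p (k+1)) y) ≤ 0)) :
    ∀ N : ℕ, ∃ k ≤ N, dH κ (p k) (p (k+1)) ≤
      Real.sqrt (f (p 0) - fstar) / Real.sqrt (((1 - α * L) / (2 * α)) * (N + 1)) := by
  intro N
  by_contra hcon
  push Not at hcon
  have hLpos : 0 < L := by
    rcases hL.eq_or_lt with h | h
    · rw [← h] at hα2; simp at hα2; linarith
    · exact h
  have hαL : α * L < 1 := by rwa [lt_div_iff₀ hLpos] at hα2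
  have sk : 0 < Real.sqrt κ := Real.sqrt_pos.2 hκ
  set Γ : ℝ := (1 - α * L) / (2 * α) with hΓ
  have hΓpos : 0 < Γ := div_pos (by linarith) (by linarith)
  have hpC : ∀ k, p k ∈ C := by
    intro k
    cases k with
    | zero => exact hp0
    | succ k => exact (hrec k).1
  have hdesc : ∀ k, 0 < dH κ (p k) (p (k+1)) →
      f (p (k+1)) ≤ f (p k) - Γ * dH κ (p k) (p (k+1)) ^ 2 := by
    intro k hk
    have hpk := hpC k
    have hqk := hpC (k+1)
    obtain ⟨a, hadef⟩ : ∃ a, a = Real.arcosh (-(κ * lip (p k) (p (k+1)))) := ⟨_, rfl⟩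
    have hd : dH κ (p k) (p (k+1)) = 1 / Real.sqrt κ * a := by rw [hadef]; rfl
    have ha : 0 < a := by
      rw [hd] at hk
      exact pos_of_mul_pos_right hk (by positivity)
    have hcosh : -(κ * lip (p k) (p (k+1))) = Real.cosh a := by
      rw [hadef, Real.cosh_arcosh (hyp_one_le hκ (hC hpk) (hC hqk))]
    obtain ⟨u, hpu, huu, hqe⟩ := polar hκ (hC hpk) (hC hqk) ha hcosh
    have hpg : lip (p k) (gradH κ f (p k)) = 0 := lip_projT hκ (hC hpk) _
    have h1 := descent_lip hκ hC hconv hf hLip hpk hqk ha hpu huu hqe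
    have h2 := proj_ineq hκ (hC hpk) ha
      (by rw [lip_neg_right, lip_smul_right, hpg]; ring) hpu huu hqe ((hrec k).2.1 _ hpk)
    rw [lip_neg_left, lip_smul_left] at h2
    have hd2 : dH κ (p k) (p (k+1)) ^ 2 = a ^ 2 / κ := by
      rw [hd, mul_pow, div_pow, Real.sq_sqrt hκ.le]; ring
    rw [hd2]
    have h3 : a * lip (gradH κ f (p k)) u ≤ - (a ^ 2 / (2 * κ * α)) := by
      have h4 : lip (gradH κ f (p k)) u ≤ -(a / (2 * κ)) / α := by
        rw [le_div_iff₀ hα1]; linarith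
      calc _ ≤ a * (-(a / (2 * κ)) / α) := by gcongr
        _ = _ := by field_simp
    have h5 : Γ * (a ^ 2 / κ) = a ^ 2 / (2 * κ * α) - L * a ^ 2 / (2 * κ) := by
      rw [hΓ]; field_simp
    rw [h5]; linarith
  set B : ℝ := Real.sqrt (f (p 0) - fstar) / Real.sqrt (Γ * (N + 1)) with hB
  have hB0 : 0 ≤ B := by positivity
  have hsum : ∀ m : ℕ, m ≤ N + 1 → f (p m) ≤ f (p 0) - m * (Γ * B ^ 2) ∧
      (0 < m → f (p m) < f (p 0) - m * (Γ * B ^ 2)) := by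
    intro m
    induction m with
    | zero => intro _; simp
    | succ m ih =>
      intro hm
      have h1 := (ih (by omega)).1
      have h2 := hcon m (by omega)
      have h3 := hdesc m (lt_of_le_of_lt hB0 h2)
      have h4 : B ^ 2 < dH κ (p m) (p (m+1)) ^ 2 := by gcongr
      have h5 := mul_lt_mul_of_pos_left h4 hΓpos
      have h6 : f (p (m+1)) < f (p 0) - ((m + 1 : ℕ) : ℝ) * (Γ * B ^ 2) := by
        push_cast; linarith
      exact ⟨h6.le, fun _ => h6⟩
  have h1 := (hsum (N+1) le_rfl).2 (Nat.succ_pos N)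
  have h2 := hfstar _ (hpC (N+1))
  have h3 := hfstar _ hp0
  have h4 : ((N + 1 : ℕ) : ℝ) * (Γ * B ^ 2) = f (p 0) - fstar := by
    rw [hB, div_pow, Real.sq_sqrt (by linarith), Real.sq_sqrt (by positivity)]
    push_cast
    field_simp
  linarith
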